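/- (Weyl functions) Assume B_{N+1} has N+1 simple real zeros λ_1 > ⋯ > λ_{N+1}. Then for every real z that is not a zero of B_{N+1} and every a ∈ {1,…,p}: e_1ᵀ·(z·I_{N+1} − T^{[N]})^{−1}·e^ν_a = B^{(a)}_{N+1}(z)/B_{N+1}(z) = Σ_{n=1}^{N+1} μ_{n,a}/(z − λ_n). -/

import Mathlib

open Polynomial

noncomputable def Qp (p : ℕ) (A : Fin p → ℕ → Polynomial ℝ) (n N : ℕ) : Polynomial ℝ :=
  Matrix.det (Matrix.of fun i a : Fin p =>
    if (i : ℕ) = 0 then A a n else A a (N + (i : ℕ)))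

noncomputable def truncM (T : ℕ → ℕ → ℝ) (N : ℕ) : Matrix (Fin (N + 1)) (Fin (N + 1)) ℝ :=
  Matrix.of fun i j : Fin (N + 1) => T (i : ℕ) (j : ℕ)

noncomputable def nuMat (p : ℕ) (A : Fin p → ℕ → Polynomial ℝ) : Matrix (Fin p) (Fin p) ℝ :=
  Matrix.of fun j a : Fin p => (A a (j : ℕ)).coeff 0

noncomputable def wfun (p : ℕ) (A : Fin p → ℕ → Polynomial ℝ) (B : ℕ → Polynomial ℝ)
    (N : ℕ) (lam : Fin (N + 1) → ℝ) (k : Fin (N + 1)) (n : ℕ) : ℝ :=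
  Polynomial.eval (lam k) (Qp p A n N) /
    ∑ l ∈ Finset.range (N + 1),
      Polynomial.eval (lam k) (Qp p A l N) * Polynomial.eval (lam k) (B l)

noncomputable def mu (p : ℕ) (A : Fin p → ℕ → Polynomial ℝ) (B : ℕ → Polynomial ℝ)
    (N : ℕ) (lam : Fin (N + 1) → ℝ) (k : Fin (N + 1)) (a : Fin p) : ℝ :=
  ∑ b : Fin p, (nuMat p A)⁻¹ a b * wfun p A B N lam k (b : ℕ)

noncomputable def Btr (T : ℕ → ℕ → ℝ) (N k : ℕ) : Polynomial ℝ :=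
  if k ≤ N + 1 then
    (Matrix.of fun i j : Fin (N + 1 - k) => T (k + (i : ℕ)) (k + (j : ℕ))).charpoly
  else 0

noncomputable def enu (p : ℕ) (A : Fin p → ℕ → Polynomial ℝ) (N : ℕ) (a : Fin p) :
    Fin (N + 1) → ℝ :=
  fun j => if hj : (j : ℕ) < p then (nuMat p A)⁻¹ a ⟨(j : ℕ), hj⟩ else 0

noncomputable def Bsec (p : ℕ) (T : ℕ → ℕ → ℝ) (A : Fin p → ℕ → Polynomial ℝ)
    (N : ℕ) (a : Fin p) : Polynomial ℝ :=
  ∑ b : Fin p, Polynomial.C ((nuMat p A)⁻¹ a b) * Btr T N ((b : ℕ) + 1)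

/-! Both families of recursion polynomials are eigenvectors of `T` up to a truncation defect: for
the characteristic matrix `X - T^{[N]}` one has `(X - T^{[N]}) (B_0, …, B_N)ᵀ = B_{N+1} e_{N+1}` and
`(Q_{0,N}, …, Q_{N,N}) (X - T^{[N]}) = T_{N+p,N} Q_{N+p,N} e_{N+1}ᵀ`, the latter because
`Q_{N+1,N} = ⋯ = Q_{N+p-1,N} = 0`. At a zero `λ` of `B_{N+1}` the first defect vanishes, and pairing
the left vector with the right eigenvector `B_m(λ)` shows that so does the second, as soon as
`∑ Q_{l,N}(λ) B_l(λ) ≠ 0`. Hence the resolvent of `T^{[N]}` is diagonalised by these vectors, which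
gives the partial fractions. The quotient is Cramer's rule: the minors of a Hessenberg matrix along
its first column are, up to sign, trailing principal minors. -/

open Matrix

section CharacteristicMatrix

variable {n R : Type*} [Fintype n] [DecidableEq n] [CommRing R] {M : Matrix n n R}

lemma map_eval_charmatrix (M : Matrix n n R) (z : R) :
    (charmatrix M).map (eval z) = z • (1 : Matrix n n R) - M := by
  ext i j
  rcases eq_or_ne i j with rfl | hij <;> simp [*]

lemma mulVec_eval_eq_smul {v : n → R[X]} {i : n} {f : R[X]} {z : R}
    (hv : charmatrix M *ᵥ v = Pi.single i f) (hf : eval z f = 0) :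
    M *ᵥ (fun j => eval z (v j)) = z • fun j => eval z (v j) := by
  have hzero : (z • (1 : Matrix n n R) - M) *ᵥ (fun j => eval z (v j)) = 0 := by
    ext k
    have h := RingHom.map_mulVec (evalRingHom z) (charmatrix M) v k
    rw [hv] at h
    rw [← map_eval_charmatrix]
    refine h.symm.trans ?_
    rcases eq_or_ne k i with rfl | hki <;> simp [*]
  rw [sub_mulVec, smul_mulVec, one_mulVec, sub_eq_zero] at hzero
  exact hzero.symm

lemma eval_vecMul_eq_smul {r : n → R[X]} {i : n} {f : R[X]} {z : R}
    (hr : r ᵥ* charmatrix M = Pi.single i f) (hf : eval z f = 0) :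
    (fun j => eval z (r j)) ᵥ* M = z • fun j => eval z (r j) := by
  rw [← mulVec_transpose] at hr ⊢
  rw [← charmatrix_transpose] at hr
  exact mulVec_eval_eq_smul hr hf

lemma charmatrix_mulVec_C_of_mulVec_eq_smul {u : n → R} {z : R} (hu : M *ᵥ u = z • u) :
    charmatrix M *ᵥ (fun j => C (u j)) = (X - C z) • fun j => C (u j) := by
  ext1 k
  have hk : (M.map C *ᵥ fun j => C (u j)) k = C (z * u k) :=
    (RingHom.map_mulVec C M u k).symm.trans (congrArg C (congrFun hu k))
  rw [charmatrix, sub_mulVec, Pi.sub_apply, RingHom.mapMatrix_apply, hk, scalar_apply,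
    mulVec_diagonal, Pi.smul_apply, smul_eq_mul, C_mul, sub_mul]

lemma smul_one_sub_inv_apply {K : Type*} [Field K] (M : Matrix n n K) (z : K) (i j : n) :
    (z • (1 : Matrix n n K) - M)⁻¹ i j
      = eval z ((charmatrix M).adjugate i j) / eval z M.charpoly := by
  have hadj : eval z ((charmatrix M).adjugate i j) = (z • (1 : Matrix n n K) - M).adjugate i j := by
    rw [← map_eval_charmatrix]
    exact congrFun (congrFun ((evalRingHom z).map_adjugate (charmatrix M)) i) j
  rw [hadj, eval_charpoly, scalar_apply, ← smul_one_eq_diagonal, inv_def, Ring.inverse_eq_inv',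
    Matrix.smul_apply, smul_eq_mul, div_eq_inv_mul]

/- Pairing `r` with the eigenvector `u` gives `(X - z) ∑ r_j u_j = f u_i`. So `f(z) u_i = 0`, and
`u_i = 0` would make the polynomial `∑ r_j u_j` vanish identically. -/
lemma eval_eq_zero_of_vecMul_charmatrix_eq_single [IsDomain R] {r : n → R[X]} {i : n} {f : R[X]}
    {u : n → R} {z : R} (hr : r ᵥ* charmatrix M = Pi.single i f) (hu : M *ᵥ u = z • u)
    (hru : (fun j => eval z (r j)) ⬝ᵥ u ≠ 0) : eval z f = 0 := by
  have hpair : (X - C z) * (r ⬝ᵥ fun j => C (u j)) = f * C (u i) := by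
    rw [← smul_eq_mul, ← dotProduct_smul, ← charmatrix_mulVec_C_of_mulVec_eq_smul hu,
      dotProduct_mulVec, hr, single_dotProduct]
  have heval : eval z (r ⬝ᵥ fun j => C (u j)) = (fun j => eval z (r j)) ⬝ᵥ u := by
    simp only [dotProduct, eval_finsetSum, eval_mul, eval_C]
  have hfu : eval z f * u i = 0 := by simpa using (congrArg (eval z) hpair).symm
  refine (mul_eq_zero.mp hfu).resolve_right fun hui => hru ?_
  rw [hui, C_0, mul_zero] at hpair
  rw [← heval, (mul_eq_zero.mp hpair).resolve_left (X_sub_C_ne_zero z), eval_zero]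

end CharacteristicMatrix

section SpectralDecomposition

variable {ι K : Type*} [Fintype ι] [Field K] {M : Matrix ι ι K}

lemma dotProduct_eq_zero_of_eigenvectors {u w : ι → K} {a b : K} (hw : w ᵥ* M = a • w)
    (hu : M *ᵥ u = b • u) (hab : a ≠ b) : w ⬝ᵥ u = 0 := by
  have h : a * (w ⬝ᵥ u) = b * (w ⬝ᵥ u) := by
    rw [← smul_eq_mul, ← smul_dotProduct, ← hw, ← dotProduct_mulVec, hu, dotProduct_smul,
      smul_eq_mul]
  by_contra hne
  exact hab (mul_right_cancel₀ hne h)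

lemma smul_one_sub_inv_apply_eq_sum [DecidableEq ι] {u w : ι → ι → K} {lam : ι → K}
    (hlam : Function.Injective lam) (hu : ∀ k, M *ᵥ u k = lam k • u k)
    (hw : ∀ k, w k ᵥ* M = lam k • w k) (hwu : ∀ k, w k ⬝ᵥ u k ≠ 0)
    {z : K} (hz : ∀ k, z ≠ lam k) (i j : ι) :
    (z • (1 : Matrix ι ι K) - M)⁻¹ i j
      = ∑ k, u k i * (w k j / (w k ⬝ᵥ u k) / (z - lam k)) := by
  let U : Matrix ι ι K := of fun i k => u k i
  let W : Matrix ι ι K := of fun k j => w k j / (w k ⬝ᵥ u k)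
  let D : Matrix ι ι K := diagonal fun k => (z - lam k)⁻¹
  have hWU : W * U = 1 := by
    ext k l
    have hkl : (W * U) k l = w k ⬝ᵥ u l / (w k ⬝ᵥ u k) := by
      simp only [mul_apply, W, U, of_apply, dotProduct, Finset.sum_div, div_mul_eq_mul_div]
    rcases eq_or_ne k l with rfl | hne
    · rw [hkl, div_self (hwu k), one_apply_eq]
    · rw [hkl, dotProduct_eq_zero_of_eigenvectors (hw k) (hu l) (hlam.ne hne), zero_div,
        one_apply_ne hne]
  have hDW : D * W * (z • (1 : Matrix ι ι K) - M) = W := by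
    ext k l
    have hkl : (w k ᵥ* M) l = lam k * w k l := congrFun (hw k) l
    have hWM : (W * M) k l = lam k * W k l := by
      simp only [mul_apply, W, of_apply, div_mul_eq_mul_div, ← Finset.sum_div]
      rw [← mul_div_assoc, ← hkl]
      rfl
    rw [Matrix.mul_assoc, diagonal_mul, Matrix.mul_sub, Matrix.mul_smul, Matrix.mul_one,
      Matrix.sub_apply, Matrix.smul_apply, smul_eq_mul, hWM, ← sub_mul,
      inv_mul_cancel_left₀ (sub_ne_zero.mpr (hz k))]
  have hinv : (z • (1 : Matrix ι ι K) - M)⁻¹ = U * (D * W) :=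
    inv_eq_left_inv (by rw [Matrix.mul_assoc, hDW, mul_eq_one_comm.mp hWU])
  rw [hinv, mul_apply]
  refine Finset.sum_congr rfl fun k _ => ?_
  rw [diagonal_mul, inv_mul_eq_div]
  rfl

end SpectralDecomposition

section HessenbergDeterminant

variable {R : Type*} [CommRing R]

lemma det_submatrix_succAbove_succ_of_hessenberg {n : ℕ} {H : ℕ → ℕ → R}
    (hH : ∀ i l, i + 1 < l → H i l = 0) (j : Fin (n + 1)) :
    ((of fun i l : Fin (n + 1) => H i l).submatrix j.succAbove Fin.succ).det
      = (∏ i ∈ Finset.range j, H i (i + 1)) *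
        (of fun i l : Fin (n - j) => H (j + 1 + i) (j + 1 + l)).det := by
  induction n generalizing H with
  | zero =>
    obtain rfl : j = 0 := Fin.fin_one_eq_zero j
    simp
  | succ n ih =>
    refine Fin.cases ?_ (fun j => ?_) j
    · simp only [Fin.val_zero, Finset.range_zero, Finset.prod_empty, one_mul, Fin.succAbove_zero]
      congr 1
      ext i l
      simp only [submatrix_apply, of_apply, Fin.val_succ, zero_add, add_comm 1]
      rfl
    · have hminor : ((of fun i l : Fin (n + 1 + 1) => H i l).submatrix
          j.succ.succAbove Fin.succ).submatrix Fin.succ (Fin.succAbove 0)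
          = (of fun i l : Fin (n + 1) => H (i + 1) (l + 1)).submatrix j.succAbove Fin.succ := by
        ext i l
        simp only [submatrix_apply, of_apply, Fin.val_succ, Fin.succ_succAbove_succ,
          Fin.succAbove_zero]
      have hshift := ih (H := fun i l => H (i + 1) (l + 1)) (fun i l h => hH _ _ (by omega)) j
      rw [det_succ_row_zero, Finset.sum_eq_single 0]
      · rw [hminor, hshift, Fin.val_succ, Finset.prod_range_succ', Nat.add_sub_add_right]
        simp only [Fin.val_zero, pow_zero, one_mul, submatrix_apply, of_apply,
          Fin.succ_succAbove_zero, Fin.val_succ, zero_add, mul_assoc, mul_left_comm (H 0 1),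
          add_right_comm _ _ 1]
      · intro l _ hl
        have hpos : 0 < (l : ℕ) := Fin.pos_iff_ne_zero.mpr hl
        have hzero : H 0 (l + 1) = 0 := hH _ _ (by omega)
        simp [hzero]
      · simp

end HessenbergDeterminant

section RecursionPolynomials

variable {R : Type*} [CommRing R]

/-- Lower Hessenberg matrices with unit superdiagonal and `p` subdiagonals, as doubly indexed
sequences. -/
structure IsBandedHessenberg (p : ℕ) (T : ℕ → ℕ → R) : Prop where
  superdiag : ∀ n, T n (n + 1) = 1
  above : ∀ n m, n + 1 < m → T n m = 0
  below : ∀ n m, m + p < n → T n m = 0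

/-- The type II recursion polynomials `B_n` of a banded Hessenberg matrix. -/
structure IsTypeII (p : ℕ) (T : ℕ → ℕ → R) (B : ℕ → R[X]) : Prop where
  zero : B 0 = 1
  succ : ∀ n, B (n + 1) = (X - C (T n n)) * B n
    - ∑ j ∈ Finset.Icc 1 p, (if j ≤ n then C (T n (n - j)) * B (n - j) else 0)

/-- Solutions of the type I recurrence of a banded Hessenberg matrix, with unspecified initial
values. -/
def IsTypeI (p : ℕ) (T : ℕ → ℕ → R) (q : ℕ → R[X]) : Prop :=
  ∀ n, (if n = 0 then 0 else q (n - 1))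
    + ∑ i ∈ Finset.range (p + 1), C (T (n + i) n) * q (n + i) = X * q n

/-- The leading principal submatrix `T^{[N]}`, of size `N + 1`. -/
def leadingTruncation {α : Type*} (T : ℕ → ℕ → α) (N : ℕ) : Matrix (Fin (N + 1)) (Fin (N + 1)) α :=
  of fun i j => T i j

/-- The truncated polynomial `B^{[k]}_{N+1}`, which is `1` for `k = N + 1` (an empty determinant)
and `0` for `k > N + 1`. -/
noncomputable def truncatedCharpoly (T : ℕ → ℕ → R) (N k : ℕ) : R[X] :=
  if k ≤ N + 1 then (of fun i j : Fin (N + 1 - k) => T (k + i) (k + j)).charpoly else 0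

/-- The determinant `Q_{n,N}` of the type I polynomials with indices `n, N + 1, …, N + p - 1`. -/
noncomputable def typeIDet {p : ℕ} (A : Fin p → ℕ → R[X]) (n N : ℕ) : R[X] :=
  det (of fun i a : Fin p => if (i : ℕ) = 0 then A a n else A a (N + i))

variable {p N : ℕ} {T : ℕ → ℕ → R} {B : ℕ → R[X]}

lemma sum_range_eq_sum_Icc_sub {M : Type*} [AddCommMonoid M] {f : ℕ → M} {n : ℕ}
    (hf : ∀ m, m + p < n → f m = 0) :
    ∑ m ∈ Finset.range n, f m = ∑ j ∈ Finset.Icc 1 p, if j ≤ n then f (n - j) else 0 := by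
  have hband : ∀ m ∈ Finset.range n, f m ≠ 0 → n ≤ m + p := fun m _ hm =>
    not_lt.mp (mt (hf m) hm)
  rw [← Finset.sum_filter, ← Finset.sum_filter_of_ne hband]
  refine Finset.sum_nbij' (n - ·) (n - ·) ?_ ?_ ?_ ?_ ?_ <;>
    intro m hm <;> simp only [Finset.mem_filter, Finset.mem_range, Finset.mem_Icc] at hm ⊢
  · omega
  · omega
  · omega
  · omega
  · rw [Nat.sub_sub_self hm.1.le]

lemma IsTypeII.sum_range_mul (hB : IsTypeII p T B) (hT : IsBandedHessenberg p T) (n : ℕ) :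
    ∑ m ∈ Finset.range (n + 2), C (T n m) * B m = X * B n := by
  have hlow := sum_range_eq_sum_Icc_sub (f := fun m => C (T n m) * B m) (p := p) (n := n)
    fun m hm => by rw [hT.below n m hm, C_0, zero_mul]
  rw [Finset.sum_range_succ, Finset.sum_range_succ, hlow, hT.superdiag, hB.succ, C_1]
  ring

lemma IsTypeI.sum_range_mul {q : ℕ → R[X]} (hq : IsTypeI p T q) (hT : IsBandedHessenberg p T)
    {n L : ℕ} (hL : n + p < L) : ∑ j ∈ Finset.range L, C (T j n) * q j = X * q n := by
  have hbelow : ∑ j ∈ Finset.range L, C (T j n) * q j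
      = ∑ j ∈ Finset.range (n + (p + 1)), C (T j n) * q j := by
    refine (Finset.sum_subset (Finset.range_mono (by omega)) fun j _ hj => ?_).symm
    rw [hT.below j n (by simpa [Nat.add_one_le_iff, ← add_assoc] using hj), C_0, zero_mul]
  rw [hbelow, Finset.sum_range_add, ← hq n]
  congr 1
  cases n with
  | zero => simp
  | succ n =>
    rw [Finset.sum_range_succ, hT.superdiag, Finset.sum_eq_zero]
    · simp
    · intro j hj
      rw [hT.above j (n + 1) (by simpa using hj), C_0, zero_mul]

lemma IsTypeI.sum_mul {ι : Type*} [Fintype ι] {q : ι → ℕ → R[X]} (hq : ∀ a, IsTypeI p T (q a))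
    (c : ι → R[X]) : IsTypeI p T fun n => ∑ a, c a * q a n := by
  intro n
  have hshift : (if n = 0 then 0 else ∑ a, c a * q a (n - 1))
      = ∑ a, c a * (if n = 0 then 0 else q a (n - 1)) := by
    split_ifs <;> simp
  simp only [hshift, Finset.mul_sum, mul_left_comm _ (c _)]
  rw [Finset.sum_comm, ← Finset.sum_add_distrib]
  simp only [← Finset.mul_sum, ← mul_add]
  exact Finset.sum_congr rfl fun a _ => by rw [hq a n]

lemma charmatrix_leadingTruncation_apply (T : ℕ → ℕ → R) (i j : Fin (N + 1)) :
    charmatrix (leadingTruncation T N) i j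
      = (if (i : ℕ) = j then X else 0) - C (T i j) := by
  simp [charmatrix_apply, leadingTruncation, diagonal_apply, Fin.ext_iff]

lemma adjugate_charmatrix_leadingTruncation_zero (hT : IsBandedHessenberg p T) (j : Fin (N + 1)) :
    (charmatrix (leadingTruncation T N)).adjugate 0 j = truncatedCharpoly T N (j + 1) := by
  have hminor := det_submatrix_succAbove_succ_of_hessenberg
    (H := fun i l => (if i = l then X else 0) - C (T i l))
    (fun i l h => by simp [hT.above i l h, show i ≠ l by omega]) j
  have hchar : charmatrix (leadingTruncation T N)
      = of fun i l : Fin (N + 1) => (if (i : ℕ) = l then X else 0) - C (T i l) :=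
    Matrix.ext (charmatrix_leadingTruncation_apply T)
  rw [adjugate_fin_succ_eq_det_submatrix, hchar, Fin.succAbove_zero, hminor, truncatedCharpoly,
    if_pos (by omega), Nat.add_sub_add_right, charpoly]
  have hsuper : ∏ i ∈ Finset.range j, ((if i = i + 1 then X else 0) - C (T i (i + 1)))
      = (-1 : R[X]) ^ (j : ℕ) := by
    simp [hT.superdiag]
  rw [hsuper, ← mul_assoc, Fin.val_zero, add_zero, ← mul_pow, neg_one_mul, neg_neg, one_pow,
    one_mul]
  congr 1
  ext1 i l
  simp [charmatrix_apply, diagonal_apply, Fin.ext_iff]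

lemma IsTypeII.charmatrix_mulVec (hB : IsTypeII p T B) (hT : IsBandedHessenberg p T) :
    charmatrix (leadingTruncation T N) *ᵥ (fun m : Fin (N + 1) => B m)
      = Pi.single (Fin.last N) (B (N + 1)) := by
  ext1 n
  have hsum : ∑ m ∈ Finset.range (N + 1), C (T n m) * B m
      = X * B n - if n = Fin.last N then B (N + 1) else 0 := by
    rw [← hB.sum_range_mul hT n]
    split_ifs with hn
    · rw [hn, Fin.val_last, Finset.sum_range_succ _ (N + 1), hT.superdiag, C_1, one_mul,
        add_sub_cancel_right]
    · have hlt : (n : ℕ) < N := Fin.val_lt_last hn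
      rw [sub_zero]
      refine (Finset.sum_subset (Finset.range_mono (by omega)) fun m _ hm => ?_).symm
      rw [hT.above n m (by simpa [Nat.add_one_le_iff] using hm), C_0, zero_mul]
  rw [← Fin.sum_univ_eq_sum_range fun m => C (T n m) * B m] at hsum
  simp [mulVec, dotProduct, charmatrix_leadingTruncation_apply, sub_mul, hsum, Pi.single_apply,
    ← Fin.ext_iff]

lemma IsTypeI.vecMul_charmatrix {q : ℕ → R[X]} (hq : IsTypeI p T q) (hT : IsBandedHessenberg p T)
    (hp : 1 ≤ p) (hwindow : ∀ n, N < n → n < N + p → q n = 0) :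
    (fun n : Fin (N + 1) => q n) ᵥ* charmatrix (leadingTruncation T N)
      = Pi.single (Fin.last N) (C (T (N + p) N) * q (N + p)) := by
  ext1 m
  have hsum : ∑ n ∈ Finset.range (N + 1), q n * C (T n m)
      = X * q m - if m = Fin.last N then C (T (N + p) N) * q (N + p) else 0 := by
    have hmiddle : ∑ n ∈ Finset.range (N + p), q n * C (T n m)
        = ∑ n ∈ Finset.range (N + 1), q n * C (T n m) := by
      refine (Finset.sum_subset (Finset.range_mono (by omega)) fun n hn hn' => ?_).symm
      rw [Finset.mem_range] at hn hn'
      rw [hwindow n (by omega) hn, zero_mul]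
    have hlast : q (N + p) * C (T (N + p) m)
        = if m = Fin.last N then C (T (N + p) N) * q (N + p) else 0 := by
      split_ifs with hm
      · rw [hm, Fin.val_last, mul_comm]
      · have hlt : (m : ℕ) < N := Fin.val_lt_last hm
        rw [hT.below _ _ (by omega), C_0, mul_zero]
    have hfull := hq.sum_range_mul hT (show (m : ℕ) + p < N + p + 1 by omega)
    simp only [mul_comm (C _) (q _)] at hfull
    rw [Finset.sum_range_succ, hmiddle] at hfull
    rw [← hlast, ← hfull, add_sub_cancel_right]
  rw [← Fin.sum_univ_eq_sum_range fun n => q n * C (T n m)] at hsum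
  simp [vecMul, dotProduct, charmatrix_leadingTruncation_apply, mul_sub, hsum, Pi.single_apply,
    ← Fin.ext_iff, mul_comm]

lemma IsTypeII.charpoly_leadingTruncation (hB : IsTypeII p T B) (hT : IsBandedHessenberg p T) :
    (leadingTruncation T N).charpoly = B (N + 1) := by
  have hlast : truncatedCharpoly T N (N + 1) = 1 := by
    simp only [truncatedCharpoly, le_refl, if_true]
    have : IsEmpty (Fin (N + 1 - (N + 1))) := by rw [Nat.sub_self]; infer_instance
    exact charpoly_isEmpty
  have hadj := congrArg ((charmatrix (leadingTruncation T N)).adjugate *ᵥ ·)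
    (hB.charmatrix_mulVec hT (N := N))
  simp only [mulVec_mulVec, adjugate_mul, smul_mulVec, one_mulVec] at hadj
  simpa [hB.zero, adjugate_charmatrix_leadingTruncation_zero hT, hlast, charpoly]
    using congrFun hadj 0

lemma isTypeI_typeIDet {A : Fin p → ℕ → R[X]} (hA : ∀ a, IsTypeI p T (A a)) (hp : 1 ≤ p) (N : ℕ) :
    IsTypeI p T fun n => typeIDet A n N := by
  obtain ⟨p, rfl⟩ := Nat.exists_eq_add_of_le' hp
  let cofactor (a : Fin (p + 1)) : R[X] :=
    (-1) ^ (a : ℕ) * det (of fun i b : Fin p => A (a.succAbove b) (N + (i + 1)))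
  have hexpand : (fun n => typeIDet A n N) = fun n => ∑ a, cofactor a * A a n := by
    ext1 n
    rw [typeIDet, det_succ_row_zero]
    refine Finset.sum_congr rfl fun a _ => ?_
    rw [mul_right_comm]
    rfl
  rw [hexpand]
  exact IsTypeI.sum_mul hA cofactor

lemma typeIDet_eq_zero (A : Fin p → ℕ → R[X]) {n : ℕ} (hn : N < n) (hnp : n < N + p) :
    typeIDet A n N = 0 := by
  have hne : n - N ≠ 0 := by omega
  refine det_zero_of_row_eq (i := ⟨0, by omega⟩) (j := ⟨n - N, by omega⟩) ?_ ?_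
  · simpa [Fin.ext_iff] using hne.symm
  · ext1 a
    simp [hne, Nat.add_sub_cancel' hn.le]

end RecursionPolynomials

section Padding

/-- The vector `c` cut off or extended by zeros to length `m`. -/
def padded {R : Type*} [Zero R] {p : ℕ} (c : Fin p → R) (m : ℕ) : Fin m → R :=
  fun j => if hj : (j : ℕ) < p then c ⟨j, hj⟩ else 0

lemma mulVec_padded_apply {ι R : Type*} [CommSemiring R] {m p : ℕ} {M : Matrix ι (Fin m) R} {i : ι}
    {f : ℕ → R} (hM : ∀ j, M i j = f j) (hf : ∀ b, m ≤ b → b < p → f b = 0) (c : Fin p → R) :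
    (M *ᵥ padded c m) i = ∑ b, c b * f b := by
  let g (j : ℕ) : R := f j * if hj : j < p then c ⟨j, hj⟩ else 0
  have hright : ∑ b, c b * f b = ∑ j ∈ Finset.range p, g j := by
    rw [← Fin.sum_univ_eq_sum_range]
    exact Finset.sum_congr rfl fun b _ => by simp [g, mul_comm]
  have hleft : (M *ᵥ padded c m) i = ∑ j ∈ Finset.range m, g j := by
    simp only [mulVec, dotProduct, hM]
    exact Fin.sum_univ_eq_sum_range g m
  rw [hleft, hright]
  rcases le_total m p with hmp | hpm
  · refine Finset.sum_subset (Finset.range_mono hmp) fun j hj hj' => ?_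
    rw [Finset.mem_range] at hj hj'
    simp only [g, hf j (not_lt.mp hj') hj, zero_mul]
  · refine (Finset.sum_subset (Finset.range_mono hpm) fun j _ hj => ?_).symm
    rw [Finset.mem_range] at hj
    simp only [g, hj, dif_neg, not_false_iff, mul_zero]

end Padding

section WeylFunctions

variable {K : Type*} [Field K] {p N : ℕ} {T : ℕ → ℕ → K} {B : ℕ → K[X]} {A : Fin p → ℕ → K[X]}

/-- The normalised left eigenvector entry `w_{k,n+1}` at an eigenvalue `x = λ_k`. The quotient is
meaningful only when `∑ Q_{l,N}(x) B_l(x) ≠ 0`. -/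
noncomputable def christoffelWeight (A : Fin p → ℕ → K[X]) (B : ℕ → K[X]) (N : ℕ) (x : K)
    (n : ℕ) : K :=
  eval x (typeIDet A n N) /
    ∑ l ∈ Finset.range (N + 1), eval x (typeIDet A l N) * eval x (B l)

lemma resolvent_zero_apply_eq_div (hT : IsBandedHessenberg p T) (hB : IsTypeII p T B) (z : K)
    (j : Fin (N + 1)) :
    (z • (1 : Matrix (Fin (N + 1)) (Fin (N + 1)) K) - leadingTruncation T N)⁻¹ 0 j
      = eval z (truncatedCharpoly T N (j + 1)) / eval z (B (N + 1)) := by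
  rw [smul_one_sub_inv_apply, adjugate_charmatrix_leadingTruncation_zero hT,
    hB.charpoly_leadingTruncation hT]

lemma resolvent_zero_apply_eq_sum (hT : IsBandedHessenberg p T) (hB : IsTypeII p T B) (hp : 1 ≤ p)
    (hA : ∀ a, IsTypeI p T (A a)) {lam : Fin (N + 1) → K} (hlam : Function.Injective lam)
    (hroots : ∀ k, eval (lam k) (B (N + 1)) = 0)
    (hden : ∀ k, ∑ l ∈ Finset.range (N + 1),
      eval (lam k) (typeIDet A l N) * eval (lam k) (B l) ≠ 0)
    {z : K} (hz : ∀ k, z ≠ lam k) (j : Fin (N + 1)) :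
    (z • (1 : Matrix (Fin (N + 1)) (Fin (N + 1)) K) - leadingTruncation T N)⁻¹ 0 j
      = ∑ k, christoffelWeight A B N (lam k) j / (z - lam k) := by
  have hright (k) := mulVec_eval_eq_smul (hB.charmatrix_mulVec hT) (hroots k)
  have hQ := (isTypeI_typeIDet hA hp N).vecMul_charmatrix hT hp fun n => typeIDet_eq_zero A
  have hpair (k) : (fun l : Fin (N + 1) => eval (lam k) (typeIDet A l N)) ⬝ᵥ
      (fun l : Fin (N + 1) => eval (lam k) (B l))
      = ∑ l ∈ Finset.range (N + 1), eval (lam k) (typeIDet A l N) * eval (lam k) (B l) :=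
    Fin.sum_univ_eq_sum_range (fun l => eval (lam k) (typeIDet A l N) * eval (lam k) (B l)) _
  have hpair_ne (k) := (hpair k).trans_ne (hden k)
  have hleft (k) := eval_vecMul_eq_smul hQ
    (eval_eq_zero_of_vecMul_charmatrix_eq_single hQ (hright k) (hpair_ne k))
  rw [smul_one_sub_inv_apply_eq_sum hlam hright hleft hpair_ne hz]
  simp only [hpair, Fin.val_zero, hB.zero, eval_one, one_mul, christoffelWeight]

theorem stmt_17_general (hT : IsBandedHessenberg p T) (hB : IsTypeII p T B) (hp : 1 ≤ p)
    (hA : ∀ a, IsTypeI p T (A a)) {lam : Fin (N + 1) → K} (hlam : Function.Injective lam)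
    (hroots : ∀ k, eval (lam k) (B (N + 1)) = 0)
    (hden : ∀ k, ∑ l ∈ Finset.range (N + 1),
      eval (lam k) (typeIDet A l N) * eval (lam k) (B l) ≠ 0)
    {z : K} (hz : eval z (B (N + 1)) ≠ 0) (c : Fin p → K) :
    ((z • (1 : Matrix (Fin (N + 1)) (Fin (N + 1)) K) - leadingTruncation T N)⁻¹
        *ᵥ padded c (N + 1)) 0
      = eval z (∑ b, C (c b) * truncatedCharpoly T N (b + 1)) / eval z (B (N + 1)) ∧
    eval z (∑ b, C (c b) * truncatedCharpoly T N (b + 1)) / eval z (B (N + 1))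
      = ∑ k, (∑ b, c b * christoffelWeight A B N (lam k) b) / (z - lam k) := by
  have hzlam (k) : z ≠ lam k := fun h => hz (h ▸ hroots k)
  have hdiv := mulVec_padded_apply
    (f := fun b => eval z (truncatedCharpoly T N (b + 1)) / eval z (B (N + 1)))
    (resolvent_zero_apply_eq_div hT hB z)
    (fun b hb _ => by rw [truncatedCharpoly, if_neg (by omega), eval_zero, zero_div]) c
  have hfractions := mulVec_padded_apply
    (f := fun b => ∑ k, christoffelWeight A B N (lam k) b / (z - lam k))
    (resolvent_zero_apply_eq_sum hT hB hp hA hlam hroots hden hzlam)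
    (fun b hb hbp => by simp only [christoffelWeight, typeIDet_eq_zero A hb (by omega), eval_zero,
      zero_div, Finset.sum_const_zero]) c
  have hquotient : eval z (∑ b, C (c b) * truncatedCharpoly T N (b + 1)) / eval z (B (N + 1))
      = ∑ b, c b * (eval z (truncatedCharpoly T N (b + 1)) / eval z (B (N + 1))) := by
    simp only [eval_finsetSum, eval_mul, eval_C, Finset.sum_div, mul_div_assoc]
  rw [hquotient]
  refine ⟨hdiv, hdiv.symm.trans (hfractions.trans ?_)⟩
  simp only [Finset.mul_sum, Finset.sum_div, mul_div_assoc]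
  exact Finset.sum_comm

end WeylFunctions

theorem stmt_17
    (p : ℕ) (hp : 1 ≤ p)
    (T : ℕ → ℕ → ℝ)
    (hT1 : ∀ n, T n (n + 1) = 1)
    (hTsup : ∀ n m, n + 1 < m → T n m = 0)
    (hTsub : ∀ n m, m + p < n → T n m = 0)
    (hTlow : ∀ n, p ≤ n → T n (n - p) ≠ 0)
    (B : ℕ → Polynomial ℝ)
    (hB0 : B 0 = 1)
    (hBrec : ∀ n, B (n + 1) = (X - C (T n n)) * B n
      - ∑ j ∈ Finset.Icc 1 p, (if j ≤ n then C (T n (n - j)) * B (n - j) else 0))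
    (A : Fin p → ℕ → Polynomial ℝ)
    (hAconst : ∀ a : Fin p, ∀ j < p, ∃ c : ℝ, A a j = C c)
    (hAzero : ∀ a : Fin p, ∀ j : ℕ, j < (a : ℕ) → A a j = 0)
    (hAone : ∀ a : Fin p, A a (a : ℕ) = 1)
    (hArec : ∀ a : Fin p, ∀ n : ℕ,
      (if n = 0 then 0 else A a (n - 1))
        + ∑ i ∈ Finset.range (p + 1), C (T (n + i) n) * A a (n + i) = X * A a n)
    (N : ℕ) (lam : Fin (N + 1) → ℝ)
    (hroots : ∀ k, eval (lam k) (B (N + 1)) = 0)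
    (hanti : StrictAnti lam)
    (hsimple : ∀ k, eval (lam k) (derivative (B (N + 1))) ≠ 0)
    (hden : ∀ k : Fin (N + 1), ∑ l ∈ Finset.range (N + 1),
      eval (lam k) (Qp p A l N) * eval (lam k) (B l) ≠ 0) :
    ∀ z : ℝ, eval z (B (N + 1)) ≠ 0 → ∀ a : Fin p,
      Matrix.mulVec ((z • (1 : Matrix (Fin (N + 1)) (Fin (N + 1)) ℝ) - truncM T N)⁻¹)
          (enu p A N a) 0
        = eval z (Bsec p T A N a) / eval z (B (N + 1)) ∧
      eval z (Bsec p T A N a) / eval z (B (N + 1))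
        = ∑ n : Fin (N + 1), mu p A B N lam n a / (z - lam n) := fun _ hz a =>
  stmt_17_general ⟨hT1, hTsup, hTsub⟩ ⟨hB0, hBrec⟩ hp hArec hanti.injective hroots hden hz
    ((nuMat p A)⁻¹ a)
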